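/- arXiv:1401.1409 — 3 statements merged into one kernel-verified Lean document; each statement's English description precedes it below -/
import Mathlib

section
/- Assume A is flat as an R-module. Let B be a right A-comodule and let M be a left A-comodule that is finitely presented and flat (equivalently, finitely generated projective) as an R-module. Endow M* = Hom_R(M,R) with the right A-comodule structure ρ_{M*} (which exists and is unique because M is finitely generated projective) characterized by Σ f₍₀₎(m)·f₍₁₎ = Σ f(m₍₀₎)·S(m₍₋₁₎) in A for all f ∈ M* and m ∈ M, and endow B ⊗_R M* with the codiagonal right A-coaction ρ(b ⊗ f) = Σ (b₍₀₎ ⊗ f₍₀₎) ⊗ b₍₁₎·f₍₁₎. Let Com_A(M,B) = {h ∈ Hom_R(M,B) : ρ_B(h(m)) = Σ h(m₍₀₎) ⊗ m₍₋₁₎ for all m ∈ M} be the R-module of comodule morphisms from M to B. Then the canonical R-linear map B ⊗_R M* → Hom_R(M,B), b ⊗ f ↦ (m ↦ f(m)·b), restricts to an R-module isomorphism (B ⊗_R M*)^A ≅ Com_A(M,B), natural in M. -/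
open TensorProduct

section ComodDefs

variable (R A : Type*) [CommRing R] [CommRing A] [HopfAlgebra R A]

/-- `ρ : M →ₗ[R] M ⊗[R] A` is a right `A`-comodule structure on `M`:
coassociativity and counitality. -/
def IsComodule {M : Type*} [AddCommGroup M] [Module R M]
    (ρ : M →ₗ[R] M ⊗[R] A) : Prop :=
  ((TensorProduct.assoc R M A A).toLinearMap ∘ₗ ρ.rTensor A ∘ₗ ρ
      = (LinearMap.lTensor M (Coalgebra.comul (R := R) (A := A))) ∘ₗ ρ)
  ∧ ((TensorProduct.rid R M).toLinearMap
      ∘ₗ (LinearMap.lTensor M (Coalgebra.counit (R := R) (A := A))) ∘ₗ ρ = LinearMap.id)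

/-- The invariants `M^A = {m : M | ρ m = m ⊗ 1}` of a comodule. -/
def comodInvariants {M : Type*} [AddCommGroup M] [Module R M]
    (ρ : M →ₗ[R] M ⊗[R] A) : Set M :=
  {m : M | ρ m = m ⊗ₜ[R] (1 : A)}

/-- `α : A → B` is a total integral for the comodule algebra `(B, ρB)`:
a unitary morphism of `A`-comodules. -/
def IsTotalIntegral {B : Type*} [CommRing B] [Algebra R B]
    (ρB : B →ₐ[R] B ⊗[R] A) (α : A →ₗ[R] B) : Prop :=
  α 1 = 1 ∧ ρB.toLinearMap ∘ₗ α
    = (α.rTensor A) ∘ₗ (Coalgebra.comul (R := R) (A := A))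

variable (B : Type*) [CommRing B] [Algebra R B]
variable (M : Type*) [AddCommGroup M] [Module R M] [Module B M] [IsScalarTower R B M]

/-- Scalar multiplication by `b : B` on `M`, as an `R`-linear map. -/
def bsmul (b : B) : M →ₗ[R] M where
  toFun m := b • m
  map_add' := smul_add b
  map_smul' r m := smul_comm b r m

/-- The action of `B ⊗[R] A` on `M ⊗[R] A` (`B` acting on the first factor, `A` by
multiplication on the second). -/
noncomputable def tensorAction : (B ⊗[R] A) →ₗ[R] (M ⊗[R] A) →ₗ[R] (M ⊗[R] A) :=
  TensorProduct.lift <| LinearMap.mk₂ R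
    (fun b a => TensorProduct.map (bsmul R B M b) (LinearMap.mulLeft R a))
    (fun b₁ b₂ a => by
      have h : bsmul R B M (b₁ + b₂) = bsmul R B M b₁ + bsmul R B M b₂ :=
        LinearMap.ext fun m => add_smul b₁ b₂ m
      simp only [h, TensorProduct.map_add_left])
    (fun r b a => by
      have h : bsmul R B M (r • b) = r • bsmul R B M b :=
        LinearMap.ext fun m => smul_assoc r b m
      simp only [h, TensorProduct.map_smul_left])
    (fun b a₁ a₂ => by
      have h : LinearMap.mulLeft R (a₁ + a₂)
          = LinearMap.mulLeft R a₁ + LinearMap.mulLeft R a₂ :=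
        LinearMap.ext fun x => add_mul a₁ a₂ x
      simp only [h, TensorProduct.map_add_right])
    (fun r b a => by
      have h : LinearMap.mulLeft R (r • a) = r • LinearMap.mulLeft R a :=
        LinearMap.ext fun x => smul_mul_assoc r a x
      simp only [h, TensorProduct.map_smul_right])

/-- `(M, ρM)` is a `(B,A)`-module over the comodule algebra `(B, ρB)`: a `B`-module and
a right `A`-comodule whose coaction is `B`-linear, i.e. `ρM (b • m) = ρB b • ρM m`. -/
def IsBAModule (ρB : B →ₐ[R] B ⊗[R] A) (ρM : M →ₗ[R] M ⊗[R] A) : Prop :=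
  IsComodule R A ρM ∧
    ∀ (b : B) (m : M), ρM (b • m) = tensorAction R A B M (ρB b) (ρM m)

/-- The action map `M ⊗[R] B →ₗ[R] M`, `m ⊗ b ↦ b • m`. -/
noncomputable def smulMB : M ⊗[R] B →ₗ[R] M :=
  TensorProduct.lift <| LinearMap.mk₂ R (fun m b => b • m)
    (fun m₁ m₂ b => smul_add b m₁ m₂)
    (fun r m b => smul_comm b r m)
    (fun m b₁ b₂ => add_smul b₁ b₂ m)
    (fun r m b => smul_assoc r b m)

/-- The Reynolds operator `pr_M : M → M`, `m ↦ Σ α (S m₍₁₎) • m₍₀₎`: the composite of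
`ρ_M : M → M ⊗ A`, then `id_M ⊗ (α ∘ S) : M ⊗ A → M ⊗ B`, then the `B`-action
`M ⊗ B → M`. -/
noncomputable def reynolds (α : A →ₗ[R] B) (ρM : M →ₗ[R] M ⊗[R] A) : M →ₗ[R] M :=
  smulMB R B M ∘ₗ (LinearMap.lTensor M (α ∘ₗ HopfAlgebra.antipode (R := R))) ∘ₗ ρM

end ComodDefs

section Stmt8Defs

variable (R A : Type*) [CommRing R] [CommRing A] [HopfAlgebra R A]

/-- `ρ' : M →ₗ[R] A ⊗[R] M` is a left `A`-comodule structure on `M`. -/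
def IsLeftComodule {M : Type*} [AddCommGroup M] [Module R M]
    (ρ' : M →ₗ[R] A ⊗[R] M) : Prop :=
  ((TensorProduct.assoc R A A M).toLinearMap
      ∘ₗ ((Coalgebra.comul (R := R) (A := A)).rTensor M) ∘ₗ ρ'
    = (LinearMap.lTensor A ρ') ∘ₗ ρ')
  ∧ ((TensorProduct.lid R M).toLinearMap
      ∘ₗ ((Coalgebra.counit (R := R) (A := A)).rTensor M) ∘ₗ ρ' = LinearMap.id)

variable {R A} in
/-- `ρD` is the right `A`-comodule structure on `M* = Hom_R(M, R)` dual to the left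
comodule structure `ρ'` on `M`, i.e. it satisfies
`Σ f₍₀₎(m) • f₍₁₎ = Σ f(m₍₀₎) • S(m₍₋₁₎)` for all `f ∈ M*`, `m ∈ M`. -/
def IsDualCoaction {M : Type*} [AddCommGroup M] [Module R M]
    (ρ' : M →ₗ[R] A ⊗[R] M)
    (ρD : Module.Dual R M →ₗ[R] Module.Dual R M ⊗[R] A) : Prop :=
  ∀ (f : Module.Dual R M) (m : M),
    (TensorProduct.lid R A) (((Module.Dual.eval R M m).rTensor A) (ρD f))
      = (TensorProduct.rid R A)
          ((TensorProduct.map (HopfAlgebra.antipode (R := R)) f) (ρ' m))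

variable (B M : Type*) [AddCommGroup B] [Module R B] [AddCommGroup M] [Module R M]

/-- The codiagonal right `A`-coaction on `B ⊗_R M*`:
`b ⊗ f ↦ Σ (b₍₀₎ ⊗ f₍₀₎) ⊗ b₍₁₎ f₍₁₎`. -/
noncomputable def codiagCoaction (ρB : B →ₗ[R] B ⊗[R] A)
    (ρD : Module.Dual R M →ₗ[R] Module.Dual R M ⊗[R] A) :
    (B ⊗[R] Module.Dual R M) →ₗ[R] (B ⊗[R] Module.Dual R M) ⊗[R] A :=
  (LinearMap.lTensor (B ⊗[R] Module.Dual R M) (LinearMap.mul' R A))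
    ∘ₗ (TensorProduct.tensorTensorTensorComm R B A (Module.Dual R M) A).toLinearMap
    ∘ₗ (TensorProduct.map ρB ρD)

/-- The `R`-module `Com_A(M, B)` of comodule morphisms from a left `A`-comodule `M` to a
right `A`-comodule `B`: maps `h` with `ρ_B (h m) = Σ h(m₍₀₎) ⊗ m₍₋₁₎`. -/
def comodMorphisms (ρB : B →ₗ[R] B ⊗[R] A) (ρ' : M →ₗ[R] A ⊗[R] M) :
    Set (M →ₗ[R] B) :=
  {h | ∀ m : M, ρB (h m)
    = (TensorProduct.comm R A B) ((TensorProduct.map LinearMap.id h) (ρ' m))}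

/-- The canonical map `B ⊗_R M* → Hom_R(M, B)`, `b ⊗ f ↦ (m ↦ f m • b)`. -/
noncomputable def canonicalHom :
    (B ⊗[R] Module.Dual R M) →ₗ[R] (M →ₗ[R] B) :=
  (dualTensorHom R M B) ∘ₗ (TensorProduct.comm R B (Module.Dual R M)).toLinearMap

end Stmt8Defs

section Stmt8Helpers

variable {R A B M : Type*} [CommRing R] [CommRing A] [HopfAlgebra R A]
  [AddCommGroup B] [Module R B] [AddCommGroup M] [Module R M]

/-- `A` acting on `B ⊗ A` by multiplication on the second factor. -/
noncomputable def auxAct (R A B : Type*) [CommRing R] [CommRing A] [HopfAlgebra R A]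
    [AddCommGroup B] [Module R B] : A →ₗ[R] (B ⊗[R] A) →ₗ[R] (B ⊗[R] A) :=
  LinearMap.lTensorHom B ∘ₗ LinearMap.mul R A

lemma auxAct_tmul (a : A) (b : B) (c : A) :
    auxAct R A B a (b ⊗ₜ c) = b ⊗ₜ (a * c) := rfl

lemma auxAct_auxAct (a a' : A) (p : B ⊗[R] A) :
    auxAct R A B a (auxAct R A B a' p) = auxAct R A B (a * a') p := by
  induction p with
  | zero => simp
  | tmul b c => simp only [auxAct_tmul, mul_assoc]
  | add x y hx hy => simp only [map_add, hx, hy]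

lemma auxAct_one (p : B ⊗[R] A) : auxAct R A B 1 p = p := by
  induction p with
  | zero => simp
  | tmul b c => simp only [auxAct_tmul, one_mul]
  | add x y hx hy => simp only [map_add, hx, hy]

/-- `m ↦ Σ u(m₍₋₁₎) · φ(m₍₀₎)`. -/
noncomputable def auxT (ρ' : M →ₗ[R] A ⊗[R] M) (u : A →ₗ[R] A) (φ : M →ₗ[R] B ⊗[R] A) :
    M →ₗ[R] B ⊗[R] A :=
  TensorProduct.lift (auxAct R A B) ∘ₗ TensorProduct.map u φ ∘ₗ ρ'

lemma auxT_auxT (ρ' : M →ₗ[R] A ⊗[R] M) (hM : IsLeftComodule R A ρ') (u v : A →ₗ[R] A)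
    (φ : M →ₗ[R] B ⊗[R] A) :
    auxT ρ' u (auxT ρ' v φ)
      = auxT ρ' (LinearMap.mul' R A ∘ₗ TensorProduct.map u v ∘ₗ Coalgebra.comul) φ := by
  ext m
  have h1 : auxT ρ' u (auxT ρ' v φ) m = TensorProduct.lift (auxAct R A B)
      (TensorProduct.map u (TensorProduct.lift (auxAct R A B) ∘ₗ TensorProduct.map v φ)
        (LinearMap.lTensor A ρ' (ρ' m))) := by
    simp only [auxT, LinearMap.comp_apply]
    generalize ρ' m = y
    induction y with
    | zero => simp
    | tmul a n => simp [auxT]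
    | add x y hx hy => simp only [map_add, hx, hy]
  have h2 := LinearMap.congr_fun hM.1 m
  simp only [LinearMap.comp_apply, LinearEquiv.coe_coe] at h2
  rw [h1, ← h2]
  simp only [auxT, LinearMap.comp_apply]
  generalize ρ' m = y
  induction y with
  | zero => simp
  | add x y hx hy => simp only [map_add, hx, hy]
  | tmul a n =>
    simp only [LinearMap.rTensor_tmul, TensorProduct.map_tmul, TensorProduct.lift.tmul,
      LinearMap.comp_apply]
    generalize (Coalgebra.comul (R := R) a) = z
    induction z with
    | zero => simp
    | add x y hx hy => simp only [map_add, TensorProduct.add_tmul, hx, hy, LinearMap.add_apply]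
    | tmul a a' => simp [auxAct_auxAct]

lemma auxT_counit (ρ' : M →ₗ[R] A ⊗[R] M) (hM : IsLeftComodule R A ρ')
    (φ : M →ₗ[R] B ⊗[R] A) :
    auxT ρ' (Algebra.linearMap R A ∘ₗ Coalgebra.counit) φ = φ := by
  ext m
  have h2 := LinearMap.congr_fun hM.2 m
  simp only [LinearMap.comp_apply, LinearEquiv.coe_coe, LinearMap.id_apply] at h2
  conv_rhs => rw [← h2]
  simp only [auxT, LinearMap.comp_apply]
  generalize ρ' m = y
  induction y with
  | zero => simp
  | add x y hx hy => simp only [map_add, hx, hy]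
  | tmul a n => simp [Algebra.algebraMap_eq_smul_one, auxAct_one]

/-- `b ⊗ f ⊗ a ↦ (m ↦ f m • b ⊗ a)`. -/
noncomputable def auxE (R A B M : Type*) [CommRing R] [CommRing A] [HopfAlgebra R A]
    [AddCommGroup B] [Module R B] [AddCommGroup M] [Module R M] :
    ((B ⊗[R] Module.Dual R M) ⊗[R] A) →ₗ[R] (M →ₗ[R] B ⊗[R] A) :=
  dualTensorHom R M (B ⊗[R] A) ∘ₗ
    ((TensorProduct.congr (TensorProduct.comm R B (Module.Dual R M)) (LinearEquiv.refl R A)) ≪≫ₗ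
      TensorProduct.assoc R (Module.Dual R M) B A).toLinearMap

lemma auxE_tmul (b : B) (f : Module.Dual R M) (a : A) (m : M) :
    auxE R A B M ((b ⊗ₜ f) ⊗ₜ a) m = f m • (b ⊗ₜ a) := rfl

lemma auxE_injective [Module.Finite R M] [Module.Projective R M] :
    Function.Injective (auxE R A B M) :=
  (dualTensorHom_bijective (R := R) (M := M) (N := B ⊗[R] A)).1.comp (LinearEquiv.injective _)

lemma canonicalHom_tmul (b : B) (f : Module.Dual R M) (m : M) :
    canonicalHom R B M (b ⊗ₜ f) m = f m • b := rfl

lemma canonicalHom_bij [Module.Finite R M] [Module.Projective R M] :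
    Function.Bijective (canonicalHom R B M) :=
  (dualTensorHom_bijective (R := R) (M := M) (N := B)).comp (LinearEquiv.bijective _)

lemma auxE_mul (p : B ⊗[R] A) (q : Module.Dual R M ⊗[R] A) (m : M) :
    auxE R A B M (LinearMap.lTensor (B ⊗[R] Module.Dual R M) (LinearMap.mul' R A)
      (TensorProduct.tensorTensorTensorComm R B A (Module.Dual R M) A (p ⊗ₜ q))) m
    = auxAct R A B (TensorProduct.lid R A ((Module.Dual.eval R M m).rTensor A q)) p := by
  induction p with
  | zero => simp
  | add x y hx hy => simp only [map_add, TensorProduct.add_tmul, hx, hy, LinearMap.add_apply]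
  | tmul b a =>
    induction q with
    | zero => simp
    | add x y hx hy => simp only [map_add, TensorProduct.tmul_add, hx, hy, LinearMap.add_apply]
    | tmul f a' => simp [auxE_tmul, auxAct_tmul, mul_comm]

lemma auxE_codiag (ρB : B →ₗ[R] B ⊗[R] A) (ρ' : M →ₗ[R] A ⊗[R] M)
    (ρD : Module.Dual R M →ₗ[R] Module.Dual R M ⊗[R] A) (hdual : IsDualCoaction ρ' ρD)
    (x : B ⊗[R] Module.Dual R M) :
    auxE R A B M (codiagCoaction R A B M ρB ρD x)
      = auxT ρ' (HopfAlgebra.antipode R) (ρB ∘ₗ canonicalHom R B M x) := by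
  ext m
  simp only [auxT, LinearMap.comp_apply]
  induction x with
  | zero => simp
  | add x y hx hy =>
    simp only [map_add, LinearMap.add_apply, hx, hy, LinearMap.comp_add,
      TensorProduct.map_add_right]
  | tmul b f =>
    simp only [codiagCoaction, LinearMap.comp_apply, LinearEquiv.coe_coe, TensorProduct.map_tmul]
    rw [auxE_mul, hdual]
    generalize ρ' m = y
    induction y with
    | zero => simp
    | add x y hx hy => simp only [map_add, hx, hy, LinearMap.add_apply]
    | tmul a n => simp [canonicalHom_tmul]

lemma auxE_one (x : B ⊗[R] Module.Dual R M) :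
    auxE R A B M (x ⊗ₜ 1) = (TensorProduct.mk R B A).flip 1 ∘ₗ canonicalHom R B M x := by
  ext m
  induction x with
  | zero => simp
  | add x y hx hy =>
    simp only [map_add, TensorProduct.add_tmul, LinearMap.add_apply, hx, hy, LinearMap.comp_add]
  | tmul b f => simp [auxE_tmul, canonicalHom_tmul, TensorProduct.smul_tmul']

lemma auxT_id (ρ' : M →ₗ[R] A ⊗[R] M) (h : M →ₗ[R] B) (m : M) :
    auxT ρ' LinearMap.id ((TensorProduct.mk R B A).flip 1 ∘ₗ h) m
      = (TensorProduct.comm R A B) ((TensorProduct.map LinearMap.id h) (ρ' m)) := by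
  simp only [auxT, LinearMap.comp_apply]
  generalize ρ' m = y
  induction y with
  | zero => simp
  | add x y hx hy => simp only [map_add, hx, hy]
  | tmul a n => simp [auxAct_tmul]

lemma mem_invariants_iff [Module.Finite R M] [Module.Projective R M]
    (ρB : B →ₗ[R] B ⊗[R] A) (ρ' : M →ₗ[R] A ⊗[R] M) (hM : IsLeftComodule R A ρ')
    (ρD : Module.Dual R M →ₗ[R] Module.Dual R M ⊗[R] A) (hdual : IsDualCoaction ρ' ρD)
    (x : B ⊗[R] Module.Dual R M) :
    x ∈ comodInvariants R A (codiagCoaction R A B M ρB ρD) ↔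
      canonicalHom R B M x ∈ comodMorphisms R A B M ρB ρ' := by
  have e1 : x ∈ comodInvariants R A (codiagCoaction R A B M ρB ρD) ↔
      auxT ρ' (HopfAlgebra.antipode R) (ρB ∘ₗ canonicalHom R B M x)
        = (TensorProduct.mk R B A).flip 1 ∘ₗ canonicalHom R B M x := by
    rw [← auxE_codiag ρB ρ' ρD hdual, ← auxE_one, auxE_injective.eq_iff]
    rfl
  have e2 : canonicalHom R B M x ∈ comodMorphisms R A B M ρB ρ' ↔
      ρB ∘ₗ canonicalHom R B M x
        = auxT ρ' LinearMap.id ((TensorProduct.mk R B A).flip 1 ∘ₗ canonicalHom R B M x) := by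
    rw [LinearMap.ext_iff]
    simp only [auxT_id]
    rfl
  rw [e1, e2]
  constructor
  · intro h
    rw [← h, auxT_auxT ρ' hM]
    have := HopfAlgebra.mul_antipode_lTensor_comul (R := R) (A := A)
    rw [LinearMap.lTensor] at this
    rw [this, auxT_counit ρ' hM]
  · intro h
    rw [h, auxT_auxT ρ' hM]
    have := HopfAlgebra.mul_antipode_rTensor_comul (R := R) (A := A)
    rw [LinearMap.rTensor] at this
    rw [this, auxT_counit ρ' hM]

lemma canonicalHom_nat {M' : Type*} [AddCommGroup M'] [Module R M'] (g : M' →ₗ[R] M)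
    (x : B ⊗[R] Module.Dual R M) :
    canonicalHom R B M' ((LinearMap.lTensor B g.dualMap) x) = (canonicalHom R B M x) ∘ₗ g := by
  ext m
  induction x with
  | zero => simp
  | add x y hx hy =>
    simp only [map_add, LinearMap.add_apply, hx, hy, LinearMap.add_comp]
  | tmul b f => simp [canonicalHom_tmul]

end Stmt8Helpers

/-- Assume `A` is flat over `R`.  Let `B` be a right `A`-comodule and `M` a left
`A`-comodule which is finitely generated projective over `R`, with dual right coaction
`ρD` on `M*`.  Then the canonical map `B ⊗_R M* → Hom_R(M,B)`, `b ⊗ f ↦ (m ↦ f m • b)`,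
restricts to an isomorphism `(B ⊗_R M*)^A ≅ Com_A(M, B)`, naturally in `M`. -/
theorem invariants_tensor_dual_iso_comodMorphisms
    {R A B M : Type*} [CommRing R] [CommRing A] [HopfAlgebra R A] [Module.Flat R A]
    [AddCommGroup B] [Module R B]
    [AddCommGroup M] [Module R M] [Module.Finite R M] [Module.Projective R M]
    (ρB : B →ₗ[R] B ⊗[R] A) (hB : IsComodule R A ρB)
    (ρ'M : M →ₗ[R] A ⊗[R] M) (hM : IsLeftComodule R A ρ'M)
    (ρD : Module.Dual R M →ₗ[R] Module.Dual R M ⊗[R] A)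
    (hρD : IsComodule R A ρD) (hdual : IsDualCoaction ρ'M ρD)
    -- data for naturality in `M`: a second such comodule `M'` and a morphism `g : M' → M`
    (M' : Type*) [AddCommGroup M'] [Module R M'] [Module.Finite R M']
    [Module.Projective R M']
    (ρ'M' : M' →ₗ[R] A ⊗[R] M') (hM' : IsLeftComodule R A ρ'M')
    (ρD' : Module.Dual R M' →ₗ[R] Module.Dual R M' ⊗[R] A)
    (hρD' : IsComodule R A ρD') (hdual' : IsDualCoaction ρ'M' ρD')
    (g : M' →ₗ[R] M) (hg : ρ'M ∘ₗ g = (LinearMap.lTensor A g) ∘ₗ ρ'M') :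
    -- the canonical map is injective on invariants ...
    Set.InjOn (canonicalHom R B M) (comodInvariants R A (codiagCoaction R A B M ρB ρD)) ∧
    -- ... with image exactly the comodule morphisms `Com_A(M, B)` ...
    (canonicalHom R B M '' comodInvariants R A (codiagCoaction R A B M ρB ρD)
      = comodMorphisms R A B M ρB ρ'M) ∧
    -- ... and this identification is natural in `M`:
    ((LinearMap.lTensor B g.dualMap) ''
        comodInvariants R A (codiagCoaction R A B M ρB ρD)
      ⊆ comodInvariants R A (codiagCoaction R A B M' ρB ρD')) ∧
    (∀ x : B ⊗[R] Module.Dual R M,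
      canonicalHom R B M' ((LinearMap.lTensor B g.dualMap) x)
        = (canonicalHom R B M x) ∘ₗ g) := by
  have key := mem_invariants_iff ρB ρ'M hM ρD hdual
  have key' := mem_invariants_iff ρB ρ'M' hM' ρD' hdual'
  refine ⟨canonicalHom_bij.1.injOn, ?_, ?_, canonicalHom_nat g⟩
  · ext h
    constructor
    · rintro ⟨x, hx, rfl⟩
      exact (key x).1 hx
    · intro hh
      obtain ⟨x, rfl⟩ := canonicalHom_bij.2 h
      exact ⟨x, (key x).2 hh, rfl⟩
  · rintro _ ⟨x, hx, rfl⟩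
    rw [key', canonicalHom_nat]
    intro m
    have h1 := (key x).1 hx (g m)
    have h2 := LinearMap.congr_fun hg m
    simp only [LinearMap.comp_apply] at h2 ⊢
    rw [h1, h2, LinearMap.lTensor, ← LinearMap.comp_apply (TensorProduct.map _ _),
      ← TensorProduct.map_comp, LinearMap.id_comp]
end

section
/- Let B be an A-comodule algebra with invariants C = B^A. Assume C is noetherian, B is finite and flat as a C-module, and A is finitely generated and projective (finite locally free) as an R-module. Then the following are equivalent: (1) there exists a total integral α : A → B (the action is tame); (2) the functor of invariants on (B,A)-modules is exact, i.e., for every surjective morphism f : M → N of (B,A)-modules the induced map M^A → N^A on invariants is surjective. -/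
open TensorProduct

/-- The invariants `C = B^A` of a comodule algebra, as a subalgebra of `B`. -/
def invariantsSubalgebra (R A B : Type*) [CommRing R] [CommRing A] [HopfAlgebra R A]
    [CommRing B] [Algebra R B] (ρB : B →ₐ[R] B ⊗[R] A) : Subalgebra R B where
  carrier := comodInvariants R A ρB.toLinearMap
  mul_mem' := fun {a b} ha hb => by
    simp only [comodInvariants, Set.mem_setOf_eq, AlgHom.toLinearMap_apply] at *
    rw [map_mul, ha, hb, Algebra.TensorProduct.tmul_mul_tmul, one_mul]
  one_mem' := by
    simp only [comodInvariants, Set.mem_setOf_eq, AlgHom.toLinearMap_apply, map_one,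
      Algebra.TensorProduct.one_def]
  add_mem' := fun {a b} ha hb => by
    simp only [comodInvariants, Set.mem_setOf_eq] at *
    rw [map_add, ha, hb, TensorProduct.add_tmul]
  zero_mem' := by
    simp only [comodInvariants, Set.mem_setOf_eq, map_zero, TensorProduct.zero_tmul]
  algebraMap_mem' := fun r => by
    simp only [comodInvariants, Set.mem_setOf_eq, AlgHom.toLinearMap_apply,
      AlgHom.commutes, Algebra.TensorProduct.algebraMap_apply]

open TensorProduct

section Helpers

open WithConv Coalgebra HopfAlgebra

variable {R A : Type*} [CommRing R] [CommRing A] [HopfAlgebra R A]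

lemma conv_inv_right {T : Type*} [CommRing T] [Algebra R T] (g : A →ₐ[R] T) :
    toConv g.toLinearMap * toConv (g.toLinearMap ∘ₗ antipode R) = 1 := by
  have h := LinearMap.algHom_comp_convMul_distrib (R := R) g
    (toConv LinearMap.id) (toConv (antipode R (A := A)))
  rw [LinearMap.id_mul_antipode] at h
  have h2 := congrArg toConv h
  simp only [ofConv_toConv, toConv_ofConv, LinearMap.comp_id] at h2
  rw [← h2]
  ext a
  simp

lemma conv_inv_left {T : Type*} [CommRing T] [Algebra R T] (g : A →ₐ[R] T) :
    toConv (g.toLinearMap ∘ₗ antipode R) * toConv g.toLinearMap = 1 := by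
  have h := LinearMap.algHom_comp_convMul_distrib (R := R) g
    (toConv (antipode R (A := A))) (toConv LinearMap.id)
  rw [LinearMap.antipode_mul_id] at h
  have h2 := congrArg toConv h
  simp only [ofConv_toConv, toConv_ofConv, LinearMap.comp_id] at h2
  rw [← h2]
  ext a
  simp

lemma conv_comp {T T' : Type*} [CommRing T] [Algebra R T] [CommRing T'] [Algebra R T']
    (g : T →ₐ[R] T') (u v : A →ₗ[R] T) :
    toConv (g.toLinearMap ∘ₗ (toConv u * toConv v).ofConv)
      = toConv (g.toLinearMap ∘ₗ u) * toConv (g.toLinearMap ∘ₗ v) := by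
  have h := LinearMap.algHom_comp_convMul_distrib (R := R) g (toConv u) (toConv v)
  have h2 := congrArg toConv h
  simpa using h2

/-- If `g = g₁ * g₂` then `g S = g₂ S * g₁ S`. -/
lemma conv_anti {T : Type*} [CommRing T] [Algebra R T] (g g₁ g₂ : A →ₐ[R] T)
    (h : toConv g.toLinearMap = toConv g₁.toLinearMap * toConv g₂.toLinearMap) :
    toConv (g.toLinearMap ∘ₗ antipode R) =
      toConv (g₂.toLinearMap ∘ₗ antipode R) * toConv (g₁.toLinearMap ∘ₗ antipode R) := by
  refine left_inv_eq_right_inv (conv_inv_left g) ?_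
  rw [h, mul_assoc, ← mul_assoc (toConv g₂.toLinearMap), conv_inv_right, one_mul, conv_inv_right]

lemma comul_conv {T : Type*} [CommRing T] [Algebra R T] (h : A ⊗[R] A →ₐ[R] T) :
    toConv (h.comp (Bialgebra.comulAlgHom R A)).toLinearMap =
      toConv (h.comp (Algebra.TensorProduct.includeLeft)).toLinearMap *
      toConv (h.comp (Algebra.TensorProduct.includeRight)).toLinearMap := by
  ext a
  simp only [LinearMap.convMul_apply, ofConv_toConv]
  change h (comul a) = _
  generalize (comul a : A ⊗[R] A) = t
  induction t with
  | zero => simp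
  | add x y hx hy => simp only [map_add, hx, hy]
  | tmul x y => simp [← map_mul]

section Reynolds

variable {B : Type*} [CommRing B] [Algebra R B]
variable {M : Type*} [AddCommGroup M] [Module R M] [Module B M] [IsScalarTower R B M]

lemma tensorAction_tmul (b : B) (a : A) (m : M) (x : A) :
    tensorAction R A B M (b ⊗ₜ a) (m ⊗ₜ x) = (b • m) ⊗ₜ (a * x) := rfl

/-- `x ⊗ y ↦ α x • m ⊗ y` -/
noncomputable def evE (α : A →ₗ[R] B) (m : M) : A ⊗[R] A →ₗ[R] M ⊗[R] A :=
  LinearMap.rTensor A ((LinearMap.toSpanSingleton B M m).restrictScalars R ∘ₗ α)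

lemma action_eq_evE (α : A →ₗ[R] B) (m : M) (a : A) (t : A ⊗[R] A) :
    tensorAction R A B M (α.rTensor A t) (m ⊗ₜ a) = evE α m ((1 ⊗ₜ a) * t) := by
  induction t with
  | zero => simp
  | add x y hx hy => simp only [map_add, mul_add, LinearMap.add_apply, hx, hy]
  | tmul x y =>
    simp [evE, tensorAction_tmul, mul_comm]

lemma reynolds_invariant (ρB : B →ₐ[R] B ⊗[R] A) (α : A →ₗ[R] B)
    (hα : IsTotalIntegral R A ρB α) (ρM : M →ₗ[R] M ⊗[R] A) (hM : IsBAModule R A B M ρB ρM)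
    (m : M) : ρM (reynolds R A B M α ρM m) = reynolds R A B M α ρM m ⊗ₜ 1 := by
  obtain ⟨⟨hco, -⟩, hlin⟩ := hM
  -- the map `(x, a) ↦ (α ⊗ id)(δ (S a)) · x`
  let k : A →ₗ[R] B ⊗[R] A := α.rTensor A ∘ₗ comul ∘ₗ antipode R
  let Q : (M ⊗[R] A) ⊗[R] A →ₗ[R] M ⊗[R] A :=
    TensorProduct.lift ((tensorAction R A B M ∘ₗ k).flip)
  have h1 : ∀ t : M ⊗[R] A, ρM (smulMB R B M
      (LinearMap.lTensor M (α ∘ₗ antipode R) t)) = Q (ρM.rTensor A t) := by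
    intro t
    induction t with
    | zero => simp
    | add x y hx hy => simp only [map_add, hx, hy]
    | tmul x a =>
      have : ρB (α (antipode R a)) = k a := LinearMap.congr_fun hα.2 (antipode R a)
      simp [smulMB, Q, hlin, this]
  have key : toConv (Algebra.TensorProduct.includeRight : A →ₐ[R] A ⊗[R] A).toLinearMap *
      toConv (comul ∘ₗ antipode R) =
      toConv ((Algebra.TensorProduct.includeLeft : A →ₐ[R] A ⊗[R] A).toLinearMap ∘ₗ antipode R)
      := by
    have h := conv_anti _ _ _ (comul_conv (AlgHom.id R (A ⊗[R] A)))
    simp only [AlgHom.id_comp] at h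
    change _ * toConv ((Bialgebra.comulAlgHom R A).toLinearMap ∘ₗ antipode R) = _
    rw [h, ← mul_assoc, conv_inv_right, one_mul]
  have h2 : ∀ t : M ⊗[R] A, Q ((TensorProduct.assoc R M A A).symm
      (LinearMap.lTensor M (comul (R := R) (A := A)) t)) =
      smulMB R B M (LinearMap.lTensor M (α ∘ₗ antipode R) t) ⊗ₜ 1 := by
    intro t
    induction t with
    | zero => simp
    | add x y hx hy => simp only [map_add, hx, hy, TensorProduct.add_tmul]
    | tmul x c =>
      have hk := congrArg (fun w => evE α x (w.ofConv c)) key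
      have : ∀ s : A ⊗[R] A, Q ((TensorProduct.assoc R M A A).symm (x ⊗ₜ s)) =
          evE α x (LinearMap.mul' R (A ⊗[R] A) (TensorProduct.map
            (Algebra.TensorProduct.includeRight : A →ₐ[R] A ⊗[R] A).toLinearMap
            (comul ∘ₗ antipode R) s)) := by
        intro s
        induction s with
        | zero => simp
        | add x y hx hy => simp only [map_add, TensorProduct.tmul_add, hx, hy]
        | tmul a a' =>
          simp [Q, k, action_eq_evE]
      rw [LinearMap.lTensor_tmul, this]
      refine hk.trans ?_
      simp [evE, smulMB]
  have h3 : ρM.rTensor A (ρM m) = (TensorProduct.assoc R M A A).symm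
      (LinearMap.lTensor M (comul (R := R) (A := A)) (ρM m)) := by
    rw [LinearEquiv.eq_symm_apply]
    exact LinearMap.congr_fun hco m
  have := h1 (ρM m)
  rw [h3, h2] at this
  exact this

lemma reynolds_nat {N : Type*} [AddCommGroup N] [Module R N] [Module B N] [IsScalarTower R B N]
    (α : A →ₗ[R] B) (ρM : M →ₗ[R] M ⊗[R] A) (ρN : N →ₗ[R] N ⊗[R] A) (f : M →ₗ[B] N)
    (hf : ρN ∘ₗ (f.restrictScalars R) = ((f.restrictScalars R).rTensor A) ∘ₗ ρM) (m : M) :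
    f (reynolds R A B M α ρM m) = reynolds R A B N α ρN (f m) := by
  have h := LinearMap.congr_fun hf m
  simp only [LinearMap.comp_apply, LinearMap.restrictScalars_apply] at h
  simp only [reynolds, LinearMap.comp_apply, h]
  generalize ρM m = t
  induction t with
  | zero => simp
  | add x y hx hy => simp only [map_add, hx, hy]
  | tmul x a => simp [smulMB]

lemma reynolds_fix (ρB : B →ₐ[R] B ⊗[R] A) (α : A →ₗ[R] B)
    (hα : IsTotalIntegral R A ρB α) (ρM : M →ₗ[R] M ⊗[R] A) (m : M)
    (hm : m ∈ comodInvariants R A ρM) : reynolds R A B M α ρM m = m := by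
  have h : ρM m = m ⊗ₜ 1 := hm
  simp [reynolds, h, smulMB, hα.1]

end Reynolds

section HomModule

variable {B : Type*} [CommRing B] [Algebra R B]

/-- Evaluation at `a`. -/
def evAt (R : Type*) {A B : Type*} [CommRing R] [AddCommGroup A] [Module R A] [CommRing B]
    [Algebra R B] (a : A) : (A →ₗ[R] B) →ₗ[R] B := LinearMap.applyₗ a

@[simp] lemma evAt_apply (a : A) (φ : A →ₗ[R] B) : evAt R a φ = φ a := rfl

/-- `ψ_φ(a) = Σ ρ(φ a₁) (1 ⊗ S a₂)`. -/
noncomputable def psi (ρB : B →ₐ[R] B ⊗[R] A) (φ : A →ₗ[R] B) : A →ₗ[R] B ⊗[R] A :=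
  (toConv (ρB.toLinearMap ∘ₗ φ) *
    toConv ((Algebra.TensorProduct.includeRight : A →ₐ[R] B ⊗[R] A).toLinearMap ∘ₗ
      antipode R)).ofConv

lemma psi_repr (ρB : B →ₐ[R] B ⊗[R] A) (φ : A →ₗ[R] B) (a : A) :
    psi ρB φ a = ∑ i ∈ (ℛ R a).index,
      ρB (φ ((ℛ R a).left i)) * (1 ⊗ₜ antipode R ((ℛ R a).right i)) := by
  change (_ * _ : WithConv (A →ₗ[R] B ⊗[R] A)) a = _
  rw [(ℛ R a).convMul_apply]
  rfl

/-- existence of a coaction on `Hom(A,B)` -/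
lemma exists_coaction [Module.Finite R A] [Module.Projective R A] (ρB : B →ₐ[R] B ⊗[R] A) :
    (∃ ρH : (A →ₗ[R] B) →ₗ[R] (A →ₗ[R] B) ⊗[R] A,
      ∀ φ a, (evAt R a).rTensor A (ρH φ) = psi ρB φ a) := by
  obtain ⟨n, f, g, -, -, hfg⟩ := Module.Finite.exists_comp_eq_id_of_projective R A
  let c : Fin n → B →ₗ[R] (A →ₗ[R] B) := fun i =>
    { toFun := fun b => (LinearMap.proj i ∘ₗ g).smulRight b
      map_add' := fun x y => by ext; simp
      map_smul' := fun r x => LinearMap.ext fun a => smul_comm (g a i) r x }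
  let psiL : A → (A →ₗ[R] B) →ₗ[R] B ⊗[R] A := fun a =>
    { toFun := fun φ => psi ρB φ a
      map_add' := fun x y => by simp [psi_repr, add_mul, Finset.sum_add_distrib]
      map_smul' := fun r x => by simp [psi_repr, Finset.smul_sum] }
  refine ⟨∑ i, (c i).rTensor A ∘ₗ psiL (f (Pi.single i 1)), fun φ a => ?_⟩
  have hc : ∀ i, evAt R a ∘ₗ c i = (g a i) • LinearMap.id := fun i => by ext; simp [c]
  have ha : a = ∑ i, g a i • f (Pi.single i 1) := by
    conv_lhs => rw [← LinearMap.id_apply (R := R) a, ← hfg, LinearMap.comp_apply,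
      pi_eq_sum_univ' (g a)]
    simp only [map_sum, map_smul]
  simp only [LinearMap.sum_apply, map_sum, LinearMap.comp_apply, ← LinearMap.rTensor_comp_apply,
    hc]
  conv_rhs => rw [ha]
  simp [psiL, LinearMap.rTensor_smul]

lemma ev_injective [Module.Finite R A] [Module.Projective R A] {X : Type*} [AddCommGroup X]
    [Module R X] (t t' : (A →ₗ[R] B) ⊗[R] X)
    (h : ∀ a, (evAt R a).rTensor X t = (evAt R a).rTensor X t') : t = t' := by
  obtain ⟨n, f, g, -, -, hfg⟩ := Module.Finite.exists_comp_eq_id_of_projective R A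
  let c : Fin n → B →ₗ[R] (A →ₗ[R] B) := fun i =>
    { toFun := fun b => (LinearMap.proj i ∘ₗ g).smulRight b
      map_add' := fun x y => by ext; simp
      map_smul' := fun r x => LinearMap.ext fun a => smul_comm (g a i) r x }
  have hc : ∑ i, c i ∘ₗ evAt R (f (Pi.single i 1)) = LinearMap.id := by
    ext φ a
    have ha : a = ∑ i, g a i • f (Pi.single i 1) := by
      conv_lhs => rw [← LinearMap.id_apply (R := R) a, ← hfg, LinearMap.comp_apply,
        pi_eq_sum_univ' (g a)]
      simp only [map_sum, map_smul]
    conv_rhs => rw [ha]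
    simp [c]
  have key : ∀ s : (A →ₗ[R] B) ⊗[R] X,
      s = ∑ i, (c i).rTensor X ((evAt R (f (Pi.single i 1))).rTensor X s) := by
    intro s
    simp only [← LinearMap.rTensor_comp_apply, ← LinearMap.sum_apply]
    rw [← LinearMap.coe_rTensorHom]
    simp only [← map_sum, ← LinearMap.coe_rTensorHom]
    rw [hc]
    simp
  rw [key t, key t']
  simp only [h]

lemma homCoaction_isBAModule [Module.Finite R A] [Module.Projective R A]
    (ρB : B →ₐ[R] B ⊗[R] A) (hB : IsComodule R A ρB.toLinearMap)
    (ρH : (A →ₗ[R] B) →ₗ[R] (A →ₗ[R] B) ⊗[R] A)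
    (hH : ∀ φ a, (evAt R a).rTensor A (ρH φ) = psi ρB φ a) :
    IsBAModule R A B (A →ₗ[R] B) ρB ρH := by
  refine ⟨⟨?_, ?_⟩, ?_⟩
  · refine LinearMap.ext fun φ => ev_injective _ _ fun a => ?_
    let K : B ⊗[R] A →ₐ[R] B ⊗[R] (A ⊗[R] A) :=
      (Algebra.TensorProduct.assoc R R R B A A).toAlgHom.comp
        (Algebra.TensorProduct.map ρB (AlgHom.id R A))
    let L : B ⊗[R] A →ₐ[R] B ⊗[R] (A ⊗[R] A) :=
      Algebra.TensorProduct.map (AlgHom.id R B) (Bialgebra.comulAlgHom R A)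
    let i : A →ₐ[R] B ⊗[R] A := Algebra.TensorProduct.includeRight
    let ii : A ⊗[R] A →ₐ[R] B ⊗[R] (A ⊗[R] A) := Algebra.TensorProduct.includeRight
    let j₁ : A →ₐ[R] B ⊗[R] (A ⊗[R] A) := ii.comp Algebra.TensorProduct.includeLeft
    let j₂ : A →ₐ[R] B ⊗[R] (A ⊗[R] A) := ii.comp Algebra.TensorProduct.includeRight
    have hKL : K.toLinearMap ∘ₗ ρB.toLinearMap = L.toLinearMap ∘ₗ ρB.toLinearMap := hB.1
    have hKi : K.toLinearMap ∘ₗ i.toLinearMap = j₂.toLinearMap := by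
      ext a
      simp [K, i, j₂, ii, Algebra.TensorProduct.one_def]
    have hLi : L.toLinearMap ∘ₗ i.toLinearMap =
        (ii.comp (Bialgebra.comulAlgHom R A)).toLinearMap := by
      ext a
      simp [L, i, ii]
    have hconv : toConv (K.toLinearMap ∘ₗ psi ρB φ) * toConv (j₁.toLinearMap ∘ₗ antipode R)
        = toConv (L.toLinearMap ∘ₗ psi ρB φ) := by
      unfold psi
      rw [conv_comp, conv_comp, ← LinearMap.comp_assoc, hKL, ← LinearMap.comp_assoc,
        ← LinearMap.comp_assoc, ← LinearMap.comp_assoc, hKi, hLi, conv_anti _ _ _ (comul_conv ii),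
        mul_assoc]
    have hR : (evAt R a).rTensor (A ⊗[R] A)
        ((LinearMap.lTensor (A →ₗ[R] B) (comul (R := R) (A := A)) ∘ₗ ρH) φ) =
        L (psi ρB φ a) := by
      rw [← hH]
      simp only [LinearMap.comp_apply]
      generalize ρH φ = t
      induction t with
      | zero => simp
      | add x y hx hy => simp only [map_add, hx, hy]
      | tmul x y => simp [L]
    have hL : (evAt R a).rTensor (A ⊗[R] A)
        (((TensorProduct.assoc R (A →ₗ[R] B) A A).toLinearMap ∘ₗ ρH.rTensor A ∘ₗ ρH) φ) =
        (toConv (K.toLinearMap ∘ₗ psi ρB φ) * toConv (j₁.toLinearMap ∘ₗ antipode R)) a := by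
      rw [(ℛ R a).convMul_apply]
      simp only [LinearMap.comp_apply]
      change _ = ∑ i ∈ (ℛ R a).index, K (psi ρB φ ((ℛ R a).left i)) *
        j₁ (antipode R ((ℛ R a).right i))
      simp only [← hH]
      generalize ρH φ = t
      induction t with
      | zero => simp
      | add x y hx hy => simp only [map_add, hx, hy, add_mul, Finset.sum_add_distrib]
      | tmul x y =>
        have e : ∀ s : (A →ₗ[R] B) ⊗[R] A, (evAt R a).rTensor (A ⊗[R] A)
            ((TensorProduct.assoc R (A →ₗ[R] B) A A) (s ⊗ₜ y)) =
            TensorProduct.assoc R B A A ((evAt R a).rTensor A s ⊗ₜ y) := by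
          intro s
          induction s with
          | zero => simp
          | add x y hx hy => simp only [map_add, TensorProduct.add_tmul, hx, hy]
          | tmul x y => simp
        simp only [LinearMap.rTensor_tmul, LinearEquiv.coe_coe, e, hH, psi_repr,
          TensorProduct.sum_tmul, map_sum]
        refine Finset.sum_congr rfl fun l _ => ?_
        simp only [evAt_apply, K, j₁, ii]
        change _ = (TensorProduct.assoc R B A A (ρB _ ⊗ₜ y)) * (1 ⊗ₜ (_ ⊗ₜ 1))
        generalize ρB _ = s
        induction s with
        | zero => simp
        | add x y hx hy => simp only [map_add, TensorProduct.add_tmul, add_mul, hx, hy]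
        | tmul x y => simp
    rw [hR, hL, hconv]
    rfl
  · ext φ a
    let E : B ⊗[R] A →ₐ[R] B :=
      (Algebra.TensorProduct.rid R R B).toAlgHom.comp
        (Algebra.TensorProduct.map (AlgHom.id R B) (Bialgebra.counitAlgHom R A))
    have hE : E.toLinearMap ∘ₗ ρB.toLinearMap = LinearMap.id := hB.2
    have h1 : E.toLinearMap ∘ₗ psi ρB φ = φ := by
      apply toConv_injective
      unfold psi
      rw [conv_comp, ← LinearMap.comp_assoc, hE, LinearMap.id_comp]
      have h3 : E.toLinearMap ∘ₗ
          (Algebra.TensorProduct.includeRight : A →ₐ[R] B ⊗[R] A).toLinearMap ∘ₗ antipode R =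
          Algebra.linearMap R B ∘ₗ counit := by
        ext a
        simp [E, Algebra.algebraMap_eq_smul_one]
      rw [h3]
      exact mul_one (toConv φ)
    have h2 : E (psi ρB φ a) = φ a := LinearMap.congr_fun h1 a
    rw [LinearMap.id_apply, ← h2, ← hH]
    simp only [LinearMap.comp_apply]
    generalize ρH φ = t
    induction t with
    | zero => simp
    | add x y hx hy => simp only [map_add, LinearMap.add_apply, hx, hy]
    | tmul x y => simp [E]
  · intro b φ
    refine ev_injective _ _ fun a => ?_
    have e : ∀ (s : B ⊗[R] A) (t : (A →ₗ[R] B) ⊗[R] A), (evAt R a).rTensor A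
        (tensorAction R A B _ s t) = s * (evAt R a).rTensor A t := by
      intro s t
      induction s with
      | zero => simp
      | add x y hx hy => simp only [map_add, LinearMap.add_apply, add_mul, hx, hy]
      | tmul x y =>
        induction t with
        | zero => simp
        | add x y hx hy => simp only [map_add, mul_add, hx, hy]
        | tmul x y => simp [tensorAction_tmul]
    rw [e, hH, hH, psi_repr, psi_repr, Finset.mul_sum]
    simp [mul_assoc]

end HomModule

end Helpers

universe u

/-- Suppose `C = B^A` is noetherian, `B` is finite and flat as a `C`-module, and `A` is
finite projective over `R`.  Then the action is tame (a total integral exists) if and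
only if the functor of invariants on `(B,A)`-modules is exact, i.e. preserves
surjections. -/
theorem total_integral_iff_invariants_exact
    {R A B : Type u} [CommRing R] [CommRing A] [HopfAlgebra R A]
    [CommRing B] [Algebra R B]
    (ρB : B →ₐ[R] B ⊗[R] A) (hB : IsComodule R A ρB.toLinearMap)
    [IsNoetherianRing (invariantsSubalgebra R A B ρB)]
    [Module.Finite (invariantsSubalgebra R A B ρB) B]
    [Module.Flat (invariantsSubalgebra R A B ρB) B]
    [Module.Finite R A] [Module.Projective R A] :
    (∃ α : A →ₗ[R] B, IsTotalIntegral R A ρB α) ↔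
    (∀ (M N : Type u) [AddCommGroup M] [Module R M] [Module B M] [IsScalarTower R B M]
      [AddCommGroup N] [Module R N] [Module B N] [IsScalarTower R B N]
      (ρM : M →ₗ[R] M ⊗[R] A), IsBAModule R A B M ρB ρM →
      ∀ (ρN : N →ₗ[R] N ⊗[R] A), IsBAModule R A B N ρB ρN →
      ∀ (f : M →ₗ[B] N),
        ρN ∘ₗ (f.restrictScalars R) = ((f.restrictScalars R).rTensor A) ∘ₗ ρM →
        Function.Surjective f →
        ∀ n ∈ comodInvariants R A ρN, ∃ m ∈ comodInvariants R A ρM, f m = n) := by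
  constructor
  · rintro ⟨α, hα⟩ M N _ _ _ _ _ _ _ _ ρM hM ρN hN f hf hsurj n hn
    obtain ⟨m, rfl⟩ := hsurj n
    refine ⟨reynolds R A B M α ρM m, reynolds_invariant ρB α hα ρM hM m, ?_⟩
    rw [reynolds_nat α ρM ρN f hf, reynolds_fix ρB α hα ρN _ hn]
  · intro hex
    obtain ⟨ρH, hH⟩ := exists_coaction (R := R) (A := A) ρB
    have hBB : IsBAModule R A B B ρB ρB.toLinearMap := by
      refine ⟨hB, fun b m => ?_⟩
      have e : ∀ s t : B ⊗[R] A, tensorAction R A B B s t = s * t := by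
        intro s t
        induction s with
        | zero => simp
        | add x y hx hy => simp only [map_add, LinearMap.add_apply, add_mul, hx, hy]
        | tmul x y =>
          induction t with
          | zero => simp
          | add x y hx hy => simp only [map_add, mul_add, hx, hy]
          | tmul x y => simp [tensorAction_tmul]
      rw [e]
      simp
    let f : (A →ₗ[R] B) →ₗ[B] B :=
      { toFun := fun φ => φ 1
        map_add' := fun x y => rfl
        map_smul' := fun b x => rfl }
    have hf : ρB.toLinearMap ∘ₗ (f.restrictScalars R) =
        ((f.restrictScalars R).rTensor A) ∘ₗ ρH := by
      refine LinearMap.ext fun φ => ?_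
      have h1 := hH φ 1
      have h2 : psi ρB φ 1 = ρB (φ 1) := by
        change LinearMap.mul' R _ (TensorProduct.map _ _ (Coalgebra.comul (1 : A))) = _
        simp [Algebra.TensorProduct.one_def]
        rw [← Algebra.TensorProduct.one_def, mul_one]
      rw [h2] at h1
      exact h1.symm
    obtain ⟨α, hα, hα1⟩ := hex (A →ₗ[R] B) B ρH (homCoaction_isBAModule ρB hB ρH hH)
      ρB.toLinearMap hBB f hf
      (fun b => ⟨(Coalgebra.counit (R := R) (A := A)).smulRight b, by simp [f]⟩) 1
      (by simp [comodInvariants, Algebra.TensorProduct.one_def])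
    refine ⟨α, hα1, ?_⟩
    have hα' : ρH α = α ⊗ₜ 1 := hα
    have hpsi : psi ρB α =
        (Algebra.TensorProduct.includeLeft : B →ₐ[R] B ⊗[R] A).toLinearMap ∘ₗ α := by
      ext a
      rw [← hH, hα']
      simp
    have h3 := congrArg (fun w => WithConv.toConv w * WithConv.toConv
      (Algebra.TensorProduct.includeRight : A →ₐ[R] B ⊗[R] A).toLinearMap) hpsi
    simp only [psi, WithConv.toConv_ofConv] at h3
    rw [mul_assoc, conv_inv_left, mul_one] at h3
    refine (WithConv.toConv_injective h3).trans ?_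
    change LinearMap.mul' R _ ∘ₗ TensorProduct.map _ _ ∘ₗ Coalgebra.comul = _
    rw [← LinearMap.comp_assoc]
    congr 1
    ext x y
    simp
end

section
/- Assume R is noetherian and A is finitely generated and projective (finite locally free) as an R-module. Then the following are equivalent: (1) the functor of invariants on right A-comodules is exact, i.e., for every surjective morphism of right A-comodules M → N the induced map M^A → N^A is surjective (the finite flat group scheme whose Hopf algebra of functions is A is linearly reductive); (2) there exists an R-linear map α : A → R with α(1_A) = 1 and Σ α(a₁)·a₂ = α(a)·1_A for all a ∈ A (a total integral for the trivial action, so that the trivial action of the group scheme on Spec R is tame). -/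
open TensorProduct

section Helpers

open Coalgebra WithConv HopfAlgebra

variable {R A : Type*} [CommRing R] [CommRing A] [HopfAlgebra R A]

/-- The antipode reverses the comultiplication. -/
lemma aux_comul_antipode (a : A) :
    comul (R := R) (antipode R a)
      = TensorProduct.map (antipode R) (antipode R)
          (TensorProduct.comm R A A (comul (R := R) a)) := by
  let i₁ : A →ₐ[R] A ⊗[R] A := Algebra.TensorProduct.includeLeft
  let i₂ : A →ₐ[R] A ⊗[R] A := Algebra.TensorProduct.includeRight
  have h : toConv (Bialgebra.comulAlgHom R A) = toConv i₁ * toConv i₂ := by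
    apply WithConv.ofConv_injective
    apply AlgHom.ext
    intro x
    change comul x = (toConv i₁ * toConv i₂) x
    rw [AlgHom.convMul_apply]
    generalize comul (R := R) x = t
    induction t with
    | zero => simp
    | add x y hx hy => rw [map_add, ← hx, ← hy]
    | tmul x y => simp [i₁, i₂]
  have h2 : (toConv (Bialgebra.comulAlgHom R A))⁻¹ = (toConv i₂)⁻¹ * (toConv i₁)⁻¹ := by
    rw [h]
    exact mul_inv_rev (G := WithConv (A →ₐ[R] A ⊗[R] A)) _ _
  have h3 := congrArg (fun f : WithConv (A →ₐ[R] A ⊗[R] A) => f a) h2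
  change comul (R := R) (antipode R a) = _ at h3
  rw [h3]
  rw [AlgHom.convMul_apply]
  generalize comul (R := R) a = t
  induction t with
  | zero => simp
  | add x y hx hy => simp only [map_add, hx, hy]
  | tmul x y =>
    change (1 ⊗ₜ[R] (antipode R x)) * ((antipode R y) ⊗ₜ[R] 1) = _
    simp

lemma aux_conv_antipode (f g : A →ₗ[R] A) :
    toConv ((toConv f * toConv g).ofConv ∘ₗ antipode R)
      = toConv (g ∘ₗ antipode R) * toConv (f ∘ₗ antipode R) := by
  apply WithConv.ofConv_injective
  apply LinearMap.ext
  intro a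
  change LinearMap.mul' R A (TensorProduct.map f g (comul (antipode R a))) =
    LinearMap.mul' R A (TensorProduct.map (g ∘ₗ antipode R) (f ∘ₗ antipode R) (comul a))
  rw [aux_comul_antipode]
  generalize comul (R := R) a = t
  induction t with
  | zero => simp
  | add x y hx hy => simp only [map_add, hx, hy]
  | tmul x y => simp [mul_comm]

/-- `Σ α(a₁) a₂ = α(a) 1`, with `α` replaced by its composite with `R → A`. -/
lemma aux_right_iff (α : A →ₗ[R] R) :
    (∀ a : A, (TensorProduct.lid R A) ((α.rTensor A) (comul (R := R) a)) = α a • (1 : A)) ↔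
    toConv (Algebra.linearMap R A ∘ₗ α) * toConv LinearMap.id
      = toConv (Algebra.linearMap R A ∘ₗ α) := by
  have key : ∀ t : A ⊗[R] A, LinearMap.mul' R A (TensorProduct.map
      (Algebra.linearMap R A ∘ₗ α) LinearMap.id t) =
      (TensorProduct.lid R A) ((α.rTensor A) t) := by
    intro t
    induction t with
    | zero => simp
    | add x y hx hy => simp only [map_add, hx, hy]
    | tmul x y => simp [Algebra.smul_def]
  constructor
  · intro h
    apply WithConv.ofConv_injective
    apply LinearMap.ext
    intro a
    change LinearMap.mul' R A (TensorProduct.map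
      (Algebra.linearMap R A ∘ₗ α) LinearMap.id (comul a)) = algebraMap R A (α a)
    rw [key, h, Algebra.smul_def, mul_one]
  · intro h a
    rw [← key, Algebra.smul_def, mul_one]
    exact congrArg (fun f : WithConv (A →ₗ[R] A) => f a) h

lemma aux_left_iff (α : A →ₗ[R] R) :
    (∀ a : A, (TensorProduct.rid R A) ((α.lTensor A) (comul (R := R) a)) = α a • (1 : A)) ↔
    toConv LinearMap.id * toConv (Algebra.linearMap R A ∘ₗ α)
      = toConv (Algebra.linearMap R A ∘ₗ α) := by
  have key : ∀ t : A ⊗[R] A, LinearMap.mul' R A (TensorProduct.map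
      LinearMap.id (Algebra.linearMap R A ∘ₗ α) t) =
      (TensorProduct.rid R A) ((α.lTensor A) t) := by
    intro t
    induction t with
    | zero => simp
    | add x y hx hy => simp only [map_add, hx, hy]
    | tmul x y => simp [Algebra.smul_def, mul_comm]
  constructor
  · intro h
    apply WithConv.ofConv_injective
    apply LinearMap.ext
    intro a
    change LinearMap.mul' R A (TensorProduct.map
      LinearMap.id (Algebra.linearMap R A ∘ₗ α) (comul a)) = algebraMap R A (α a)
    rw [key, h, Algebra.smul_def, mul_one]
  · intro h a
    rw [← key, Algebra.smul_def, mul_one]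
    exact congrArg (fun f : WithConv (A →ₗ[R] A) => f a) h

lemma aux_right_to_left (α : A →ₗ[R] R)
    (h : ∀ a : A, (TensorProduct.lid R A) ((α.rTensor A) (comul (R := R) a)) = α a • (1 : A)) :
    ∀ a : A, (TensorProduct.rid R A) (((α ∘ₗ antipode R).lTensor A) (comul (R := R) a))
      = (α ∘ₗ antipode R) a • (1 : A) := by
  rw [aux_right_iff] at h
  rw [aux_left_iff]
  have h1 := aux_conv_antipode (R := R) (Algebra.linearMap R A ∘ₗ α) LinearMap.id
  rw [h] at h1
  simp only [LinearMap.id_comp, LinearMap.comp_assoc] at h1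
  calc _ = toConv LinearMap.id * (toConv (antipode R) *
        toConv (Algebra.linearMap R A ∘ₗ α ∘ₗ antipode R)) := by rw [← h1]
    _ = _ := by rw [← mul_assoc, LinearMap.id_mul_antipode, one_mul]

lemma aux_left_to_right (α : A →ₗ[R] R)
    (h : ∀ a : A, (TensorProduct.rid R A) ((α.lTensor A) (comul (R := R) a)) = α a • (1 : A)) :
    ∀ a : A, (TensorProduct.lid R A) (((α ∘ₗ antipode R).rTensor A) (comul (R := R) a))
      = (α ∘ₗ antipode R) a • (1 : A) := by
  rw [aux_left_iff] at h
  rw [aux_right_iff]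
  have h1 := aux_conv_antipode (R := R) LinearMap.id (Algebra.linearMap R A ∘ₗ α)
  rw [h] at h1
  simp only [LinearMap.id_comp, LinearMap.comp_assoc] at h1
  calc _ = (toConv (Algebra.linearMap R A ∘ₗ α ∘ₗ antipode R) * toConv (antipode R)) *
        toConv LinearMap.id := by rw [← h1]
    _ = _ := by rw [mul_assoc, LinearMap.antipode_mul_id, mul_one]

/-- Averaging against `β`. -/
noncomputable def auxPr {M : Type*} [AddCommGroup M] [Module R M]
    (β : A →ₗ[R] R) (ρ : M →ₗ[R] M ⊗[R] A) : M →ₗ[R] M :=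
  (TensorProduct.rid R M).toLinearMap ∘ₗ β.lTensor M ∘ₗ ρ

lemma auxPr_mem {M : Type*} [AddCommGroup M] [Module R M]
    (β : A →ₗ[R] R) (ρ : M →ₗ[R] M ⊗[R] A) (hρ : IsComodule R A ρ)
    (h : ∀ a : A, (TensorProduct.rid R A) ((β.lTensor A) (comul (R := R) a)) = β a • (1 : A))
    (m : M) : auxPr β ρ m ∈ comodInvariants R A ρ := by
  change ρ (TensorProduct.rid R M (β.lTensor M (ρ m))) =
    (TensorProduct.rid R M (β.lTensor M (ρ m))) ⊗ₜ[R] (1 : A)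
  let φ : A ⊗[R] A →ₗ[R] A := (TensorProduct.rid R A).toLinearMap ∘ₗ β.lTensor A
  have key : ∀ t : M ⊗[R] A, ρ (TensorProduct.rid R M (β.lTensor M t)) =
      φ.lTensor M (TensorProduct.assoc R M A A (ρ.rTensor A t)) := by
    intro t
    induction t with
    | zero => simp
    | add x y hx hy => simp only [map_add, hx, hy]
    | tmul x y =>
      simp only [LinearMap.lTensor_tmul, TensorProduct.rid_tmul, map_smul, LinearMap.rTensor_tmul]
      generalize ρ x = s
      induction s with
      | zero => simp
      | add x y hx hy => simp only [map_add, hx, hy, TensorProduct.add_tmul, smul_add]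
      | tmul u v => simp [φ]
  rw [key]
  have hc : TensorProduct.assoc R M A A (ρ.rTensor A (ρ m)) = (comul (R := R)).lTensor M (ρ m) :=
    LinearMap.congr_fun hρ.1 m
  rw [hc]
  generalize ρ m = t
  induction t with
  | zero => simp
  | add x y hx hy => simp only [map_add, hx, hy, TensorProduct.add_tmul]
  | tmul u v =>
    simp only [LinearMap.lTensor_tmul]
    change u ⊗ₜ[R] ((TensorProduct.rid R A) ((β.lTensor A) (comul (R := R) v))) = _
    rw [h]
    simp [TensorProduct.smul_tmul]

lemma aux_exact {M N : Type*} [AddCommGroup M] [Module R M] [AddCommGroup N] [Module R N]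
    (β : A →ₗ[R] R) (hβ : β 1 = 1)
    (ρM : M →ₗ[R] M ⊗[R] A) (ρN : N →ₗ[R] N ⊗[R] A) (f : M →ₗ[R] N)
    (hf : ρN ∘ₗ f = (f.rTensor A) ∘ₗ ρM) (m : M) (hm : f m ∈ comodInvariants R A ρN) :
    f (auxPr β ρM m) = f m := by
  have h1 : ∀ t : M ⊗[R] A, f (TensorProduct.rid R M (β.lTensor M t)) =
      TensorProduct.rid R N (β.lTensor N (f.rTensor A t)) := by
    intro t
    induction t with
    | zero => simp
    | add x y hx hy => simp only [map_add, hx, hy]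
    | tmul x y => simp
  have h2 : ρN (f m) = f.rTensor A (ρM m) := LinearMap.congr_fun hf m
  have h3 : ρN (f m) = f m ⊗ₜ[R] (1 : A) := hm
  change f (TensorProduct.rid R M (β.lTensor M (ρM m))) = _
  rw [h1, ← h2, h3]
  simp [hβ]

section Dual

variable [Module.Finite R A] [Module.Projective R A]

/-- `g ↦ (a ↦ Σ g(a₂) a₁)`. -/
noncomputable def auxHom : Module.Dual R A →ₗ[R] A →ₗ[R] A where
  toFun g := (TensorProduct.rid R A).toLinearMap ∘ₗ g.lTensor A ∘ₗ comul
  map_add' g h := by ext a; simp [LinearMap.lTensor_add]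
  map_smul' r g := by ext a; simp [LinearMap.lTensor_smul]

/-- The coaction on the dual of `A`. -/
noncomputable def auxCo : Module.Dual R A →ₗ[R] Module.Dual R A ⊗[R] A :=
  (dualTensorHomEquiv R A A).symm.toLinearMap ∘ₗ auxHom

lemma auxCo_spec (g : Module.Dual R A) : dualTensorHom R A A (auxCo g) = auxHom g :=
  (dualTensorHomEquiv R A A).apply_symm_apply (auxHom g)

lemma auxCo_isComodule : IsComodule R A (auxCo (R := R) (A := A)) := by
  constructor
  · apply LinearMap.ext
    intro g
    apply (dualTensorHom_bijective (R := R) (M := A) (N := A ⊗[R] A)).1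
    apply LinearMap.ext
    intro a
    simp only [LinearMap.comp_apply, LinearEquiv.coe_coe]
    have k1 : ∀ t : Module.Dual R A ⊗[R] A,
        dualTensorHom R A (A ⊗[R] A) (TensorProduct.assoc R _ A A (auxCo.rTensor A t)) a =
        (dualTensorHom R A A t).lTensor A (comul a) := by
      intro t
      induction t with
      | zero => simp
      | add x y hx hy =>
        simp only [map_add, LinearMap.add_apply, hx, hy, LinearMap.lTensor_add]
      | tmul h b =>
        have e1 : ∀ s : Module.Dual R A ⊗[R] A,
            dualTensorHom R A (A ⊗[R] A) (TensorProduct.assoc R _ A A (s ⊗ₜ b)) a =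
            (dualTensorHom R A A s a) ⊗ₜ b := by
          intro s
          induction s with
          | zero => simp
          | add x y hx hy =>
            simp only [map_add, LinearMap.add_apply, hx, hy, TensorProduct.add_tmul]
          | tmul u v => simp [TensorProduct.smul_tmul']
        rw [LinearMap.rTensor_tmul, e1, auxCo_spec]
        change (TensorProduct.rid R A (h.lTensor A (comul a))) ⊗ₜ b = _
        generalize comul (R := R) a = s
        induction s with
        | zero => simp
        | add x y hx hy => simp only [map_add, hx, hy, TensorProduct.add_tmul]
        | tmul u v => simp [TensorProduct.smul_tmul]
    have k2 : ∀ t : Module.Dual R A ⊗[R] A,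
        dualTensorHom R A (A ⊗[R] A) ((comul (R := R)).lTensor _ t) a =
        comul (dualTensorHom R A A t a) := by
      intro t
      induction t with
      | zero => simp
      | add x y hx hy => simp only [map_add, LinearMap.add_apply, hx, hy]
      | tmul h b => simp
    rw [k1, k2, auxCo_spec]
    change (auxHom g).lTensor A (comul a) =
      comul (TensorProduct.rid R A (g.lTensor A (comul a)))
    have k3 : ∀ t : A ⊗[R] A, comul (R := R) (TensorProduct.rid R A (g.lTensor A t)) =
        ((TensorProduct.rid R A).toLinearMap ∘ₗ g.lTensor A).lTensor A
          (TensorProduct.assoc R A A A (comul.rTensor A t)) := by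
      intro t
      induction t with
      | zero => simp
      | add x y hx hy => simp only [map_add, hx, hy]
      | tmul x y =>
        simp only [LinearMap.lTensor_tmul, TensorProduct.rid_tmul, map_smul,
          LinearMap.rTensor_tmul]
        generalize comul (R := R) x = s
        induction s with
        | zero => simp
        | add x y hx hy => simp only [map_add, hx, hy, TensorProduct.add_tmul, smul_add]
        | tmul u v => simp
    rw [k3, Coalgebra.coassoc_apply, ← LinearMap.lTensor_comp_apply]
    rfl
  · apply LinearMap.ext
    intro g
    simp only [LinearMap.comp_apply, LinearEquiv.coe_coe, LinearMap.id_apply]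
    have k : ∀ t : Module.Dual R A ⊗[R] A,
        TensorProduct.rid R _ ((counit (R := R)).lTensor _ t) =
        counit ∘ₗ dualTensorHom R A A t := by
      intro t
      induction t with
      | zero => simp
      | add x y hx hy => simp only [map_add, hx, hy, LinearMap.comp_add]
      | tmul h b => ext x; simp [mul_comm]
    rw [k, auxCo_spec]
    ext a
    change counit (R := R) (TensorProduct.rid R A (g.lTensor A (comul a))) = g a
    have k4 : ∀ t : A ⊗[R] A, counit (R := R) (TensorProduct.rid R A (g.lTensor A t)) =
        g (TensorProduct.lid R A (counit.rTensor A t)) := by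
      intro t
      induction t with
      | zero => simp
      | add x y hx hy => simp only [map_add, hx, hy]
      | tmul x y => simp [mul_comm]
    rw [k4, Coalgebra.rTensor_counit_comul]
    simp

end Dual

end Helpers

universe u

/-- Suppose `R` is noetherian and `A` is finite projective over `R`.  Then the functor of
invariants on right `A`-comodules is exact (preserves surjections) -- i.e. the finite flat
group scheme with Hopf algebra of functions `A` is linearly reductive -- if and only if
there is a total integral `α : A → R` for the trivial action: an `R`-linear map with
`α 1 = 1` and `Σ α(a₁) • a₂ = α(a) • 1` for all `a`. -/
theorem invariants_exact_iff_total_integral_trivial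
    {R A : Type u} [CommRing R] [IsNoetherianRing R] [CommRing A] [HopfAlgebra R A]
    [Module.Finite R A] [Module.Projective R A] :
    (∀ (M N : Type u) [AddCommGroup M] [Module R M] [AddCommGroup N] [Module R N]
      (ρM : M →ₗ[R] M ⊗[R] A), IsComodule R A ρM →
      ∀ (ρN : N →ₗ[R] N ⊗[R] A), IsComodule R A ρN →
      ∀ (f : M →ₗ[R] N), ρN ∘ₗ f = (f.rTensor A) ∘ₗ ρM →
        Function.Surjective f →
        ∀ n ∈ comodInvariants R A ρN, ∃ m ∈ comodInvariants R A ρM, f m = n) ↔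
    (∃ α : A →ₗ[R] R, α 1 = 1 ∧ ∀ a : A,
      (TensorProduct.lid R A) ((α.rTensor A) (Coalgebra.comul (R := R) a))
        = α a • (1 : A)) := by
  constructor
  · intro H
    have := H (Module.Dual R A) R auxCo auxCo_isComodule
      ((TensorProduct.mk R R A).flip 1)
      ⟨by ext; simp [Algebra.TensorProduct.one_def], by ext; simp⟩
      (LinearMap.applyₗ (1 : A))
      (by
        apply LinearMap.ext
        intro g
        have k : ∀ t : Module.Dual R A ⊗[R] A,
            (LinearMap.applyₗ (1 : A) : Module.Dual R A →ₗ[R] R).rTensor A t =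
            (1 : R) ⊗ₜ[R] (dualTensorHom R A A t 1) := by
          intro t
          induction t with
          | zero => simp
          | add x y hx hy =>
            simp only [map_add, LinearMap.add_apply, hx, hy, TensorProduct.tmul_add]
          | tmul h b => simp [TensorProduct.smul_tmul']
        simp only [LinearMap.comp_apply]
        rw [k, auxCo_spec]
        simp [auxHom, Algebra.TensorProduct.one_def, TensorProduct.smul_tmul'])
      (fun r => ⟨r • Coalgebra.counit, by simp⟩)
      1 (by simp [comodInvariants])
    obtain ⟨g, hg, hg1⟩ := this
    have hg1' : g 1 = 1 := hg1
    have hl : ∀ a : A, (TensorProduct.rid R A) ((g.lTensor A) (Coalgebra.comul (R := R) a))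
        = g a • (1 : A) := by
      intro a
      have hg' : auxCo g = g ⊗ₜ[R] (1 : A) := hg
      have := congrArg (fun t => dualTensorHom R A A t a) hg'
      simp only [auxCo_spec, dualTensorHom_apply] at this
      exact this
    exact ⟨g ∘ₗ HopfAlgebra.antipode R, by simp [hg1'], aux_left_to_right g hl⟩
  · rintro ⟨α, h1, h⟩ M N _ _ _ _ ρM hM ρN hN f hf hs n hn
    obtain ⟨m, rfl⟩ := hs n
    exact ⟨auxPr (α ∘ₗ HopfAlgebra.antipode R) ρM m,
      auxPr_mem _ ρM hM (aux_right_to_left α h) m,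
      aux_exact _ (by simp [h1]) ρM ρN f hf m hn⟩
end
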